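/- There is no 13×9 matrix M with integer entries such that MᵀM = G₁, where G₁ is the 9×9 integer matrix [[5,-3,-1,-1,0,0,0,0,0],[-3,6,0,0,-3,0,0,0,0],[-1,0,3,0,-1,-1,0,0,0],[-1,0,0,3,-1,0,-1,0,0],[0,-3,-1,-1,6,0,0,-1,0],[0,0,-1,0,0,2,0,0,-1],[0,0,0,-1,0,0,2,0,0],[0,0,0,0,-1,0,0,3,-1],[0,0,0,0,0,-1,0,-1,2]]. (Equivalently, since any factorization with fewer rows can be padded with zero rows, there is no integer matrix M with at most 13 rows and 9 columns satisfying MᵀM = G₁.) -/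

import Mathlib

/-!
A factorization `MᵀM = G₁` is a list of 13 integer row vectors `r` such that `∑ r i * r j = G₁ i j`
for all `i, j`.  This condition is unaffected by permuting the rows and by changing the sign of a
row, so the rows may be taken lexicographically nonnegative and sorted in decreasing lexicographic
order (`exists_sorted_rows`).  After a reordering of the coordinates that puts the vectors of
small norm first, such lists are built one column at a time: the next column has a prescribed
norm and prescribed inner products with the earlier columns, and the normalization forces
its entries to be nonincreasing along each block of rows whose earlier entries agree, and
nonnegative on the rows that are zero so far.  Together with the Cauchy–Schwarz
inequality on the rows still to be filled, this leaves at most a few dozen possibilities for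
the first `k` columns, for each `k`, and none for `k = 9`.

`extend` lists the possible next columns, `mem_extend` proves that none is missed, and the
kernel evaluates `survivors`, the list of all normalized `13 × k` partial factorizations.
-/

open Matrix

def G₁ : Matrix (Fin 9) (Fin 9) ℤ :=
  !![5,-3,-1,-1,0,0,0,0,0;
     -3,6,0,0,-3,0,0,0,0;
     -1,0,3,0,-1,-1,0,0,0;
     -1,0,0,3,-1,0,-1,0,0;
     0,-3,-1,-1,6,0,0,-1,0;
     0,0,-1,0,0,2,0,0,-1;
     0,0,0,-1,0,0,2,0,0;
     0,0,0,0,-1,0,0,3,-1;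
     0,0,0,0,0,-1,0,-1,2]

namespace Goeritz

/-- The order in which the columns are determined. -/
def order : Fin 9 → Fin 9 := ![8, 5, 7, 2, 6, 3, 0, 4, 1]

/-- The matrix `G₁` with its coordinates permuted by `order`. -/
def G : Matrix (Fin 9) (Fin 9) ℤ := G₁.submatrix order order

/-- Whether `a` may follow the partial row `p` in a normalized list, where the row above it,
already extended, is `prev` (`[]` if there is none).  Partial rows are stored with
the latest entry at the head. -/
def compat (prev p : List ℤ) (a : ℤ) : Bool :=
  (match prev with
    | [] => true
    | b :: q => decide (q = p → a ≤ b)) && decide ((∀ x ∈ p, x = 0) → 0 ≤ a)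

/-- All normalized ways of adding one entry to each of the given partial rows, where `n` is the
norm of the new column, `t` its inner products with the earlier columns and `w` the norms of
these columns, all three restricted to the given rows.  Entries of absolute value greater
than 2 are not tried.  Branches violating the Cauchy–Schwarz inequality on the remaining rows are
cut; when no row remains this says that the inner products still to be attained are zero, so
the base case only has to test the norm. -/
def extend (prev : List ℤ) : List (List ℤ) → ℤ → List ℤ → List ℤ → List (List (List ℤ))
  | [], n, _, _ => if n = 0 then [[]] else []
  | p :: S, n, t, w =>
    [2, 1, 0, -1, -2].flatMap fun a =>
      let n' := n - a * a
      let t' := List.zipWith (fun x y => x - a * y) t p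
      let w' := List.zipWith (fun x y => x - y * y) w p
      if compat prev p a && decide (0 ≤ n') &&
          (List.zipWith (fun x y => decide (x * x ≤ n' * y)) t' w').all id then
        (extend (a :: p) S n' t' w').map ((a :: p) :: ·)
      else []

/-- All normalized lists of 13 partial rows on the given columns (latest column first) whose
Gram matrix is the corresponding submatrix of `G`. -/
def survivors : List (Fin 9) → List (List (List ℤ))
  | [] => [List.replicate 13 []]
  | j :: es => (survivors es).flatMap fun S =>
      extend [] S (G j j) (es.map (G j)) (es.map fun e => G e e)

theorem survivors_eq_nil : survivors [8, 7, 6, 5, 4, 3, 2, 1, 0] = [] := by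
  decide +kernel

theorem lex_entry {r r' : Fin 9 → ℤ} (h : toLex r ≤ toLex r') {j : Fin 9}
    (heq : ∀ e < j, r e = r' e) : r j ≤ r' j := by
  rcases h.eq_or_lt with h | h
  · exact (congrFun (toLex.injective h) j).le
  · obtain ⟨i, hi, hlt⟩ := h
    rcases lt_trichotomy i j with hij | rfl | hij
    · exact absurd (heq i hij) hlt.ne
    · exact hlt.le
    · exact (hi j hij).le

theorem sum_mul_sq_le (rs : List (Fin 9 → ℤ)) (i j : Fin 9) :
    (rs.map fun r => r i * r j).sum * (rs.map fun r => r i * r j).sum ≤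
      (rs.map fun r => r i * r i).sum * (rs.map fun r => r j * r j).sum := by
  have h := Finset.sum_mul_sq_le_sq_mul_sq Finset.univ
    (fun k : Fin rs.length => rs[k] i) (fun k => rs[k] j)
  have key (f : (Fin 9 → ℤ) → ℤ) : (rs.map f).sum = ∑ k : Fin rs.length, f rs[k] := by
    rw [← List.sum_ofFn, ← Function.comp_def f, ← List.map_ofFn]
    exact congrArg (fun l => (l.map f).sum) (List.ofFn_getElem (xs := rs)).symm
  rw [key, key, key]
  simpa only [sq] using h

/-- No sorted list of lexicographically nonnegative rows is missed by `extend`. -/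
theorem mem_extend (j : Fin 9) (es : List (Fin 9)) (hes : ∀ e < j, e ∈ es) :
    ∀ (rs : List (Fin 9 → ℤ)) (prev : List ℤ),
      rs.Pairwise (fun r r' => toLex r' ≤ toLex r) →
      (∀ r ∈ rs, 0 ≤ toLex r) →
      (∀ r ∈ rs, r j ∈ [2, 1, 0, -1, -2]) →
      (prev = [] ∨ ∃ r', prev = (j :: es).map r' ∧ ∀ r ∈ rs, toLex r ≤ toLex r') →
      rs.map (fun r => (j :: es).map r) ∈
        extend prev (rs.map fun r => es.map r) (rs.map fun r => r j * r j).sum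
          (es.map fun e => (rs.map fun r => r j * r e).sum)
          (es.map fun e => (rs.map fun r => r e * r e).sum)
  | [], prev, _, _, _, _ => by simp [extend]
  | r :: rs, prev, hs, hpos, hent, hprev => by
    rw [List.pairwise_cons] at hs
    have ih := mem_extend j es hes rs ((j :: es).map r) hs.2
      (fun x hx => hpos x (List.mem_cons_of_mem _ hx))
      (fun x hx => hent x (List.mem_cons_of_mem _ hx)) (.inr ⟨r, rfl, hs.1⟩)
    simp only [List.map_cons] at ih
    have ht : List.zipWith (fun x y => x - r j * y)
        (es.map fun e => ((r :: rs).map fun r => r j * r e).sum) (es.map r) =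
        es.map fun e => (rs.map fun r => r j * r e).sum := by
      simp [List.zipWith_map, List.zipWith_self]
    have hw : List.zipWith (fun x y => x - y * y)
        (es.map fun e => ((r :: rs).map fun r => r e * r e).sum) (es.map r) =
        es.map fun e => (rs.map fun r => r e * r e).sum := by
      simp [List.zipWith_map, List.zipWith_self]
    have hn : ((r :: rs).map fun r => r j * r j).sum - r j * r j =
        (rs.map fun r => r j * r j).sum := by simp
    have hcompat : compat prev (es.map r) (r j) = true := by
      simp only [compat, Bool.and_eq_true, decide_eq_true_eq]
      refine ⟨?_, fun h0 => ?_⟩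
      · rcases hprev with rfl | ⟨r', rfl, hr'⟩
        · rfl
        · simp only [List.map_cons, decide_eq_true_eq]
          intro h
          exact lex_entry (hr' r (by simp)) fun e he =>
            (List.map_inj_left.1 h e (hes e he)).symm
      · have h : toLex (0 : Fin 9 → ℤ) ≤ toLex r := hpos r (by simp)
        exact lex_entry h fun e he => (h0 _ (List.mem_map_of_mem (hes e he))).symm
    have hnonneg : 0 ≤ (rs.map fun r => r j * r j).sum :=
      List.sum_nonneg (by simp only [List.mem_map]; rintro _ ⟨x, -, rfl⟩; exact mul_self_nonneg _)
    simp only [List.map_cons (l := rs), extend, List.mem_flatMap]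
    refine ⟨r j, hent r (by simp), ?_⟩
    simp only [List.map_cons (l := rs)] at ht hw hn
    rw [ht, hw, hn, if_pos]
    · exact List.mem_map.2 ⟨_, ih, rfl⟩
    · simp only [hcompat, hnonneg, Bool.true_and, decide_true, List.zipWith_map,
        List.zipWith_self, List.all_map, List.all_eq_true, Function.comp, id,
        decide_eq_true_eq]
      exact fun e _ => sum_mul_sq_le rs j e

/-- Permuting the rows and changing their signs brings any factorization into
normalized form. -/
theorem exists_sorted_rows (N : Matrix (Fin 13) (Fin 9) ℤ) (hN : Nᵀ * N = G) :
    ∃ rs : List (Fin 9 → ℤ), rs.length = 13 ∧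
      rs.Pairwise (fun r r' => toLex r' ≤ toLex r) ∧ (∀ r ∈ rs, 0 ≤ toLex r) ∧
      ∀ i j, (rs.map fun r => r i * r j).sum = G i j := by
  classical
  let nrm (r : Fin 9 → ℤ) : Fin 9 → ℤ := if 0 ≤ toLex r then r else -r
  have hperm := List.mergeSort_perm (List.ofFn fun k => nrm (N k))
    (fun r r' => decide (toLex r' ≤ toLex r))
  refine ⟨_, by rw [hperm.length_eq, List.length_ofFn], ?_, ?_, ?_⟩
  · refine (List.pairwise_mergeSort (le := fun r r' => decide (toLex r' ≤ toLex r)) ?_ ?_ _).imp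
      of_decide_eq_true
    · intro a b c hab hbc
      simp only [decide_eq_true_eq] at *
      exact hbc.trans hab
    · intro a b
      simpa using le_total (toLex b) (toLex a)
  · intro r hr
    obtain ⟨k, rfl⟩ := (List.mem_ofFn' _ _).1 (hperm.mem_iff.1 hr)
    change 0 ≤ toLex (if 0 ≤ toLex (N k) then N k else -N k)
    split_ifs with h
    · exact h
    · rw [toLex_neg]
      exact neg_nonneg.2 (le_of_not_ge h)
  · intro i j
    have hmul (r : Fin 9 → ℤ) : nrm r i * nrm r j = r i * r j := by
      change (if 0 ≤ toLex r then r else -r) i * (if 0 ≤ toLex r then r else -r) j = _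
      split_ifs <;> simp
    rw [(hperm.map _).sum_eq, List.map_ofFn, List.sum_ofFn, ← hN]
    simp [hmul, Matrix.mul_apply]

theorem mem_survivors_step {rs : List (Fin 9 → ℤ)}
    (hs : rs.Pairwise (fun r r' => toLex r' ≤ toLex r)) (hpos : ∀ r ∈ rs, 0 ≤ toLex r)
    (hG : ∀ i j, (rs.map fun r => r i * r j).sum = G i j) (j : Fin 9) {es : List (Fin 9)}
    (hes : ∀ e < j, e ∈ es) (h : rs.map (fun r => es.map r) ∈ survivors es) :
    rs.map (fun r => (j :: es).map r) ∈ survivors (j :: es) := by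
  have hent : ∀ r ∈ rs, r j ∈ [2, 1, 0, -1, -2] := by
    intro r hr
    have h1 : r j * r j ≤ G j j := by
      rw [← hG j j]
      refine List.single_le_sum ?_ _ (List.mem_map.2 ⟨r, hr, rfl⟩)
      simp only [List.mem_map]
      rintro _ ⟨x, -, rfl⟩
      exact mul_self_nonneg _
    have h2 : G j j ≤ 6 := (by decide : ∀ i, G i i ≤ 6) j
    have h3 : r j ≤ 2 := by nlinarith
    have h4 : -2 ≤ r j := by nlinarith
    generalize r j = a at h3 h4
    interval_cases a <;> simp
  have h' := mem_extend j es hes rs [] hs hpos hent (.inl rfl)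
  simp only [hG] at h'
  exact List.mem_flatMap.2 ⟨_, h, h'⟩

end Goeritz

open Goeritz in
theorem G₁_no_factorization :
    ¬ ∃ M : Matrix (Fin 13) (Fin 9) ℤ, Mᵀ * M = G₁ := by
  rintro ⟨M, hM⟩
  obtain ⟨rs, hlen, hs, hpos, hG⟩ := exists_sorted_rows (M.submatrix id order) (by
    ext i j
    simp [G, ← hM, Matrix.mul_apply])
  have step := @mem_survivors_step rs hs hpos hG
  have h0 : rs.map (fun r => ([] : List (Fin 9)).map r) ∈ survivors [] := by
    simp [survivors, hlen]
  have h9 := step 8 (by decide) <| step 7 (by decide) <| step 6 (by decide) <|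
    step 5 (by decide) <| step 4 (by decide) <| step 3 (by decide) <| step 2 (by decide) <|
    step 1 (by decide) <| step 0 (by decide) h0
  rw [survivors_eq_nil] at h9
  exact List.not_mem_nil h9
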